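/- Let G be a group, let u ⊆ G be a minimal generating set, and let a, b ∈ u with a ≠ b. Then the image of ab in the group algebra ℂ[G] does not lie in the ℂ-linear span S(u) of the images of the elements of {1} ∪ u ∪ u⁻¹. (In the paper this is phrased as: the set {ab} ∪ u ∪ u⁻¹ ∪ {e} is linearly independent in C*(G), so ab ∉ S(u).) -/

import Mathlib

theorem Subgroup.notMem_closure_sdiff_singleton_of_minimal {G : Type*} [Group G] {u : Set G}
    (hgen : Subgroup.closure u = ⊤)
    (hmin : ∀ v : Set G, v ⊂ u → Subgroup.closure v ≠ ⊤) {x : G} (hx : x ∈ u) :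
    x ∉ Subgroup.closure (u \ {x}) := by
  intro h
  refine hmin (u \ {x}) (Set.sdiff_singleton_ssubset.2 hx) (top_le_iff.1 ?_)
  rw [← hgen, Subgroup.closure_le]
  intro y hy
  by_cases hyx : y = x
  · exact hyx ▸ h
  · exact Subgroup.subset_closure ⟨hy, hyx⟩

/-- If `u` is a minimal generating set of a group `G` and `a, b ∈ u` are distinct, then
the image of `a * b` in the group algebra `ℂ[G]` does not lie in the `ℂ`-linear span
`S(u)` of the images of the elements of `{1} ∪ u ∪ u⁻¹`. -/
theorem product_not_in_span_of_minimal_generating_set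
    {G : Type*} [Group G] (u : Set G)
    (hgen : Subgroup.closure u = ⊤)
    (hmin : ∀ v : Set G, v ⊂ u → Subgroup.closure v ≠ ⊤)
    {a b : G} (ha : a ∈ u) (hb : b ∈ u) (hab : a ≠ b) :
    (MonoidAlgebra.of ℂ G) (a * b) ∉
      Submodule.span ℂ ((MonoidAlgebra.of ℂ G) '' ({1} ∪ u ∪ u⁻¹)) := by
  rw [MonoidAlgebra.of_mem_span_of_iff]
  have not_mem {x : G} (hx : x ∈ u) : x ∉ Subgroup.closure (u \ {x}) :=
    Subgroup.notMem_closure_sdiff_singleton_of_minimal hgen hmin hx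
  have mem {x y : G} (hx : x ∈ u) (hxy : x ≠ y) : x ∈ Subgroup.closure (u \ {y}) :=
    Subgroup.subset_closure ⟨hx, hxy⟩
  rintro ((h | h) | h)
  · rw [Set.mem_singleton_iff, mul_eq_one_iff_eq_inv] at h
    apply not_mem ha
    nth_rw 2 [h]
    exact inv_mem (mem hb hab.symm)
  · by_cases hca : a * b = a
    · exact not_mem hb (mul_eq_left.1 hca ▸ one_mem _)
    by_cases hcb : a * b = b
    · exact not_mem ha (mul_eq_right.1 hcb ▸ one_mem _)
    exact not_mem h (mul_mem (mem ha (Ne.symm hca)) (mem hb (Ne.symm hcb)))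
  · rw [Set.mem_inv] at h
    by_cases hca : (a * b)⁻¹ = a
    · have hb_eq : b = a⁻¹ * a⁻¹ := by
        rw [eq_inv_mul_iff_mul_eq, ← inv_eq_iff_eq_inv, hca]
      apply not_mem hb
      nth_rw 2 [hb_eq]
      exact mul_mem (inv_mem (mem ha hab)) (inv_mem (mem ha hab))
    by_cases hcb : (a * b)⁻¹ = b
    · have ha_eq : a = b⁻¹ * b⁻¹ := by
        rw [eq_mul_inv_iff_mul_eq, ← inv_eq_iff_eq_inv, hcb]
      apply not_mem ha
      nth_rw 2 [ha_eq]
      exact mul_mem (inv_mem (mem hb hab.symm)) (inv_mem (mem hb hab.symm))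
    exact not_mem h (inv_mem (mul_mem (mem ha (Ne.symm hca)) (mem hb (Ne.symm hcb))))
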